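/- For every Schwartz function φ on ℝ, ∑_{m ∈ ℤ+1/2} F(φ)(m) e(m/2) = i · ∑_{m ∈ ℤ+1/2} φ(m) e(m/2), where F(φ)(x) := ∫_ℝ φ(w) e(wx) dw; that is, the shifted Dirac comb C⁺(φ) := ∑_{m ∈ ℤ+1/2} φ(m) e(m/2) satisfies F(C⁺) = i·C⁺ as a tempered distribution. -/

import Mathlib

open Complex MeasureTheory
open scoped Classical

noncomputable section

/-- `e(a) = exp(2πia)`. -/
def e (a : ℂ) : ℂ := Complex.exp (2 * (Real.pi : ℂ) * Complex.I * a)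

/-- The Fourier transform `F(g)(x) = ∫ g(w) e(wx) dw`. -/
def fourierT (g : ℝ → ℂ) (x : ℝ) : ℂ := ∫ w : ℝ, g w * e ((w * x : ℝ))

/-- The operator `E_σ(f)(x) = e(x²σ/2) ∫_0^x e(-w²σ/2) f(w) dw`. -/
def Eop (σ : ℂ) (f : ℝ → ℂ) (x : ℝ) : ℂ :=
  e ((x : ℂ)^2 * σ / 2) * ∫ w in (0:ℝ)..x, e (-(w : ℂ)^2 * σ / 2) * f w

/-- `ω_τ(x) = e(-x²τ/2) ∑_{m ∈ ℤ+1/2, m ≥ |x|} e(m²τ/2 + m/2)`. -/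
def omega (τ : ℂ) (x : ℝ) : ℂ :=
  e (-(x : ℂ)^2 * τ / 2) *
    ∑' m : ℤ, if |x| ≤ (m : ℝ) + 1/2 then
      e (((m : ℂ) + 1/2)^2 / 2 * τ + ((m : ℂ) + 1/2) / 2) else 0

/-- `η³(τ) = -i ∑_{m ∈ ℤ+1/2} m e(m²τ/2 + m/2)`. -/
def eta3 (τ : ℂ) : ℂ :=
  -Complex.I * ∑' m : ℤ, ((m : ℂ) + 1/2) * e (((m : ℂ) + 1/2)^2 / 2 * τ + ((m : ℂ) + 1/2) / 2)

/-- The complementary error function. -/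
def erfc (x : ℝ) : ℝ := (2 / Real.sqrt Real.pi) * ∫ t in Set.Ioi x, Real.exp (-t^2)

/-- `g⁺_τ`. -/
def gplus (τ : ℂ) (x : ℝ) : ℂ :=
  e (-(x : ℂ)^2 * τ / 2) * ((Real.sign x : ℂ) / (Complex.I * eta3 τ)) *
    ∑' m : ℤ, if |x| < (m : ℝ) + 1/2 then
      (((m : ℝ) + 1/2 - |x| : ℝ) : ℂ) * e (((m : ℂ) + 1/2)^2 / 2 * τ + ((m : ℂ) + 1/2) / 2)
    else 0

/-- `g*_τ`. -/
def gstar (τ : ℂ) (x : ℝ) : ℂ :=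
  e (-(x : ℂ)^2 * τ / 2) * ((Real.sign x : ℂ) / 2) *
    (erfc (Real.sqrt (2 * Real.pi * τ.im) * |x|) : ℂ)

/-- `g_τ = g⁺_τ - g*_τ`. -/
def gfun (τ : ℂ) (x : ℝ) : ℂ := gplus τ x - gstar τ x

/-- The operator `ξ_k f = 2i v^k conj(∂f/∂τ̄)`, with `∂/∂τ̄ = (1/2)(∂/∂u + i ∂/∂v)`. -/
def xi (k : ℝ) (f : ℂ → ℂ) (τ : ℂ) : ℂ :=
  2 * Complex.I * ((τ.im ^ k : ℝ) : ℂ) *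
    (starRingEnd ℂ) ((1/2 : ℂ) * (fderiv ℝ f τ 1 + Complex.I * fderiv ℝ f τ Complex.I))

/-- Sum of divisors function `σ₁`. -/
def sigma1 (n : ℕ) : ℕ := ∑ d ∈ Nat.divisors n, d

/-- The weight 2 Eisenstein series `E₂`. -/
def E2 (τ : ℂ) : ℂ := 1 - 24 * ∑' n : ℕ, (sigma1 (n+1) : ℂ) * e ((n + 1 : ℂ) * τ)

/-- `ϑ̃_{N,h}`. -/
def tvtheta (N : ℕ) (h : ℝ) (τ : ℂ) : ℂ :=
  (if ∃ m : ℤ, h = (m : ℝ) + 1/2 then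
      e ((h : ℂ) / 2) * E2 τ / (12 * (N : ℂ) * Complex.I * eta3 τ) else 0)
  + ∑' n : ℤ, gfun τ ((N : ℝ) * n + h)

/-- The Schwartz function `φ_τ(x,y) = √(2v)·x·e(x²τ/2 - y²τ̄/2)`. -/
def Phi (τ : ℂ) (x y : ℝ) : ℂ :=
  (Real.sqrt (2 * τ.im) : ℂ) * (x : ℂ) *
    e ((x : ℂ)^2 * τ / 2 - (y : ℂ)^2 * (starRingEnd ℂ) τ / 2)

/-- The signature (1,1) bilinear form `B((a₁,a₂),(b₁,b₂)) = a₁b₂ + a₂b₁`. -/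
def Bform (a b : ℝ × ℝ) : ℝ := a.1 * b.2 + a.2 * b.1

/-- `Z⁺_t = (t/√2, t⁻¹/√2)`. -/
def Zp (t : ℝ) : ℝ × ℝ := (t / Real.sqrt 2, t⁻¹ / Real.sqrt 2)

/-- `Z⁻_t = (t/√2, -t⁻¹/√2)`. -/
def Zm (t : ℝ) : ℝ × ℝ := (t / Real.sqrt 2, -t⁻¹ / Real.sqrt 2)

end

/-! Poisson summation for `w ↦ f w * e (a * w)`, whose Fourier transform is that of `f` translated
by `a`, exchanges the characteristics `a` and `b` of a shifted sum at the cost of the constant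
`e (a * b)`. The comb `C⁺` is the self-dual case `a = b = 1/2`, where this constant is
`e (1/4) = I`. -/

section CharacterE

lemma e_add (a b : ℂ) : e (a + b) = e a * e b := by
  simp only [e, mul_add, Complex.exp_add]

lemma e_one_div_four : e (1 / 4) = I := by
  have harg : 2 * (Real.pi : ℂ) * I * (1 / 4) = Real.pi / 2 * I := by ring
  rw [e, harg, Complex.exp_pi_div_two_mul_I]

lemma continuous_e : Continuous e := by
  unfold e
  fun_prop

lemma norm_e_ofReal (x : ℝ) : ‖e x‖ = 1 := by
  rw [e, ← Complex.norm_exp_ofReal_mul_I (2 * Real.pi * x)]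
  push_cast
  ring_nf

lemma fourier_unitAddCircle_eq_e (n : ℤ) (x : ℝ) :
    fourier n (x : UnitAddCircle) = e ((n * x : ℝ)) := by
  rw [fourier_coe_apply, e]
  push_cast
  ring_nf

end CharacterE

section FourierTransform

open scoped FourierTransform

lemma fourierT_eq_fourierInv (f : ℝ → ℂ) : fourierT f = 𝓕⁻ f := by
  ext x
  rw [fourierT, Real.fourierInv_eq']
  refine integral_congr_ae (.of_forall fun w => ?_)
  simp only [e, smul_eq_mul, RCLike.inner_apply, conj_trivial]
  push_cast
  ring_nf

lemma fourier_eq_fourierT_neg (f : ℝ → ℂ) (x : ℝ) : 𝓕 f x = fourierT f (-x) := by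
  rw [fourierT_eq_fourierInv, Real.fourierInv_eq_fourier_neg, neg_neg]

lemma fourierT_mul_e (f : ℝ → ℂ) (a x : ℝ) :
    fourierT (fun w => f w * e ((a * w : ℝ))) x = fourierT f (x + a) := by
  simp only [fourierT, mul_assoc, ← e_add]
  congr! 4 with w
  push_cast
  ring

end FourierTransform

section Poisson

open Filter Asymptotics
open scoped FourierTransform

lemma summable_int_add_of_rpow_decay {E : Type*} [NormedAddCommGroup E] [CompleteSpace E]
    {f : ℝ → E} {s : ℝ} (hs : 1 < s) (hf : f =O[cocompact ℝ] (|·| ^ (-s))) (a : ℝ) :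
    Summable fun n : ℤ => f (n + a) := by
  have hshift : Tendsto (fun n : ℤ => (n : ℝ) + a) cofinite (cocompact ℝ) :=
    (Homeomorph.addRight a).isClosedEmbedding.tendsto_cocompact.comp Int.tendsto_coe_cofinite
  have hsum : Summable fun n : ℤ => |(n : ℝ) + a| ^ (-s) := by
    simpa only [one_div, Real.rpow_neg (abs_nonneg _)] using
      (Real.summable_one_div_int_add_rpow a s).mpr hs
  exact summable_of_isBigO hsum (hf.comp_tendsto hshift)

lemma summable_fourierT_schwartz (φ : SchwartzMap ℝ ℂ) (a : ℝ) :
    Summable fun n : ℤ => fourierT φ (n + a) := by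
  rw [fourierT_eq_fourierInv, ← SchwartzMap.fourierInv_coe]
  exact summable_int_add_of_rpow_decay one_lt_two ((𝓕⁻ φ).isBigO_cocompact_rpow (-2)) a

variable {f : ℝ → ℂ} {s : ℝ}

theorem tsum_fourierT_mul_e (hc : Continuous f) (hs : 1 < s)
    (hf : f =O[cocompact ℝ] (|·| ^ (-s))) (hF : Summable fun n : ℤ => fourierT f n) (x : ℝ) :
    ∑' n : ℤ, fourierT f n * e ((n * x : ℝ)) = ∑' n : ℤ, f (n - x) := by
  have hF' : Summable fun n : ℤ => 𝓕 f n := by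
    simpa only [fourier_eq_fourierT_neg, Function.comp_def, Equiv.neg_apply, Int.cast_neg] using
      (Equiv.neg ℤ).summable_iff.mpr hF
  calc ∑' n : ℤ, fourierT f n * e ((n * x : ℝ))
    _ = ∑' n : ℤ, 𝓕 f n * fourier n ((-x : ℝ) : UnitAddCircle) := by
      rw [← (Equiv.neg ℤ).tsum_eq]
      simp only [Equiv.neg_apply, Int.cast_neg, fourier_eq_fourierT_neg,
        fourier_unitAddCircle_eq_e, neg_mul, mul_neg]
    _ = ∑' n : ℤ, f (-x + n) :=
      (Real.tsum_eq_tsum_fourier_of_rpow_decay_of_summable hc hs hf hF' (-x)).symm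
    _ = ∑' n : ℤ, f (n - x) := by simp only [neg_add_eq_sub]

theorem tsum_fourierT_add_mul_e (hc : Continuous f) (hs : 1 < s)
    (hf : f =O[cocompact ℝ] (|·| ^ (-s))) (a b : ℝ)
    (hF : Summable fun n : ℤ => fourierT f (n + a)) :
    ∑' n : ℤ, fourierT f (n + a) * e (((n + a) * b : ℝ)) =
      e ((a * b : ℝ)) * ∑' n : ℤ, f (n - b) * e ((a * (n - b) : ℝ)) := by
  let g : ℝ → ℂ := fun w => f w * e ((a * w : ℝ))
  have hgc : Continuous g := hc.mul (continuous_e.comp (by fun_prop))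
  have hg : g =O[cocompact ℝ] (|·| ^ (-s)) :=
    .trans (isBigO_of_le _ fun w => by rw [norm_mul, norm_e_ofReal, mul_one]) hf
  have hFg (x : ℝ) : fourierT g x = fourierT f (x + a) := fourierT_mul_e f a x
  have poisson := tsum_fourierT_mul_e hgc hs hg (by simpa only [hFg] using hF) b
  rw [← poisson, ← tsum_mul_left]
  refine tsum_congr fun n => ?_
  rw [hFg, add_mul, ofReal_add, e_add]
  ring

theorem shifted_comb_fourier_general (hc : Continuous f) (hs : 1 < s)
    (hf : f =O[cocompact ℝ] (|·| ^ (-s)))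
    (hF : Summable fun m : ℤ => fourierT f ((m : ℝ) + 1 / 2)) :
    ∑' m : ℤ, fourierT f ((m : ℝ) + 1 / 2) * e (((((m : ℝ) + 1 / 2) / 2 : ℝ) : ℂ)) =
      I * ∑' m : ℤ, f ((m : ℝ) + 1 / 2) * e (((((m : ℝ) + 1 / 2) / 2 : ℝ) : ℂ)) := by
  have hconst : e ((1 / 2 * (1 / 2) : ℝ)) = I := by
    rw [← e_one_div_four]
    norm_num
  have hreindex : ∑' n : ℤ, f (n - 1 / 2) * e ((1 / 2 * (n - 1 / 2) : ℝ)) =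
      ∑' m : ℤ, f ((m : ℝ) + 1 / 2) * e (((((m : ℝ) + 1 / 2) / 2 : ℝ) : ℂ)) := by
    rw [← (Equiv.addRight (1 : ℤ)).tsum_eq]
    refine tsum_congr fun m => ?_
    rw [Equiv.coe_addRight, Int.cast_add, Int.cast_one]
    ring_nf
  rw [← hreindex, ← hconst, ← tsum_fourierT_add_mul_e hc hs hf _ _ hF]
  simp only [mul_one_div]

end Poisson

/-- the shifted Dirac comb satisfies `F(C⁺) = i·C⁺`. -/
theorem shifted_comb_fourier (φ : SchwartzMap ℝ ℂ) :
    ∑' m : ℤ, fourierT (φ : ℝ → ℂ) ((m : ℝ) + 1/2) * e (((((m : ℝ) + 1/2)/2 : ℝ) : ℂ)) =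
      Complex.I * ∑' m : ℤ, φ ((m : ℝ) + 1/2) * e (((((m : ℝ) + 1/2)/2 : ℝ) : ℂ)) :=
  shifted_comb_fourier_general φ.continuous one_lt_two (φ.isBigO_cocompact_rpow (-2))
    (summable_fourierT_schwartz φ (1 / 2))
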